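/- arXiv:1103.5223 — 2 statements merged into one kernel-verified Lean document; each statement's English description precedes it below -/
import Mathlib

section
/- For every integer n ≥ 2, the juxtaposition product μ : ℳⁿ'⁰ × ℳⁿ'⁰ → ℳⁿ'⁰ defined by μ((c,a),(c′,a′)) = (c ∪ (c′ + a·e₁), a + a′) (where c′ + a·e₁ is the translate of c′ by a in the first coordinate) is continuous and homotopy-commutative: μ is homotopic to μ composed with the swap of the two factors. -/
/-!
Points of `c` and `c'` exchange their order along the first coordinate by passing each other in the
second one, which exists since `n ≥ 2`.  At time `t` both configurations are compressed in the second
coordinate by the factor `squeeze t`, `c` towards the face `0` and `c'` towards the face `1`; meanwhile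
`c` is translated along the first coordinate by `shift t * a'` and `c'` by `(1 - shift t) * a`.  The
translations only vary while `squeeze t = 1/2`, when the second coordinates of the two pieces lie on
different sides of `1/2`; at all other times the first coordinates separate the pieces (`disjoint_move`).
Time `0` is `μ` and time `1` is `μ` composed with the swap.

Continuity (`continuous_homotopyFun`) is checked on tuples.  The map from injective tuples to
configurations is continuous (`eventually_range_mem`).  Conversely, near `(c₀, a₀)` every element of
`ℳⁿ'⁰` is the range of an injective tuple close to a given enumeration of `c₀`
(`eventually_exists_tuple`): the configurations involved lie in a common ball, so no points can
come in from or escape to infinity.  This reduces the claim to the continuity of an explicit map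
of tuples.
-/

open Metric Set

noncomputable section

/-- `ℝⁿ` as Euclidean space. -/
abbrev Euc (n : ℕ) : Type := EuclideanSpace ℝ (Fin n)

/-- The set `𝒞ⁿ` of finite subsets of `ℝⁿ` (including the empty set). -/
def ConfSp (n : ℕ) : Type := {c : Set (Euc n) // c.Finite}

/-- The space of injective `p`-tuples of points of `U ⊆ ℝⁿ`, topologized as a subspace
of the product `(ℝⁿ)ᵖ`. -/
def InjTup (n p : ℕ) (U : Set (Euc n)) : Set (Fin p → Euc n) :=
  {f | Function.Injective f ∧ ∀ i, f i ∈ U}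

/-- `V` is an open set of `p`-element subsets of `U`, for the quotient topology induced
by the map sending an injective `p`-tuple in `U` to its underlying `p`-element set. -/
def IsOpenPSubsets (n p : ℕ) (U : Set (Euc n)) (V : Set (Set (Euc n))) : Prop :=
  (∀ s ∈ V, s ⊆ U ∧ s.ncard = p) ∧
    IsOpen {f : InjTup n p U | Set.range (f : Fin p → Euc n) ∈ V}

/-- The topology on `𝒞ⁿ` generated by the basic sets `C(B,V)`, where `B` is a closed ball
centered at the origin, `V` is an open set of `p`-element subsets of the interior of `B`,
and `C(B,V)` consists of the finite sets `c` with `c ∩ ∂B = ∅` and `c ∩ B ∈ V`. -/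
instance ConfSp.topologicalSpace (n : ℕ) : TopologicalSpace (ConfSp n) :=
  TopologicalSpace.generateFrom
    {S | ∃ (r : ℝ) (_ : 0 < r) (p : ℕ) (V : Set (Set (Euc n))),
      IsOpenPSubsets n p (ball (0 : Euc n) r) V ∧
      S = {c : ConfSp n | c.1 ∩ sphere (0 : Euc n) r = ∅ ∧ c.1 ∩ closedBall (0 : Euc n) r ∈ V}}

/-- The region `ℝᵏ × (0,1)ⁿ⁻ᵏ` inside `ℝⁿ`. -/
def BoxRegion (n k : ℕ) : Set (Euc n) :=
  {x | ∀ i : Fin n, k ≤ (i : ℕ) → x i ∈ Ioo (0 : ℝ) 1}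

/-- The subspace `𝒞ⁿ'ᵏ` of `𝒞ⁿ` consisting of configurations contained in `ℝᵏ × (0,1)ⁿ⁻ᵏ`. -/
def ConfSpk (n k : ℕ) : Type := {c : ConfSp n // c.1 ⊆ BoxRegion n k}

/-- The region `ℝᵏ × (0,a) × (0,1)ⁿ⁻ᵏ⁻¹` inside `ℝⁿ`. -/
def SlabRegion (n k : ℕ) (a : ℝ) : Set (Euc n) :=
  {x | (∀ i : Fin n, (i : ℕ) = k → x i ∈ Ioo 0 a) ∧
    ∀ i : Fin n, k < (i : ℕ) → x i ∈ Ioo (0 : ℝ) 1}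

/-- The monoid space `ℳⁿ'ᵏ`: the subspace of `𝒞ⁿ × [0,∞)` of pairs `(c,a)` with
`c ⊆ ℝᵏ × (0,a) × (0,1)ⁿ⁻ᵏ⁻¹`. -/
def Mon (n k : ℕ) : Type :=
  {q : ConfSp n × ℝ // 0 ≤ q.2 ∧ q.1.1 ⊆ SlabRegion n k q.2}
instance (n k : ℕ) : TopologicalSpace (ConfSpk n k) :=
  inferInstanceAs (TopologicalSpace {c : ConfSp n // c.1 ⊆ BoxRegion n k})

instance (n k : ℕ) : TopologicalSpace (Mon n k) :=
  inferInstanceAs (TopologicalSpace {q : ConfSp n × ℝ // 0 ≤ q.2 ∧ q.1.1 ⊆ SlabRegion n k q.2})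

/-! ### Tuples and the topology of configurations -/

/-- The configuration of values of a tuple. -/
def rangeConf {n : ℕ} {ι : Type*} [Finite ι] (f : ι → Euc n) : ConfSp n :=
  ⟨range f, finite_range f⟩

/-- The map sending an injective tuple to its set of values is continuous at `f₀`. -/
lemma eventually_range_mem {n : ℕ} {ι : Type*} [Fintype ι] (f₀ : ι → Euc n)
    (h₀ : Function.Injective f₀) (c₀ : ConfSp n) (hc₀ : c₀.1 = range f₀) (S : Set (ConfSp n))
    (hS : S ∈ nhds c₀) :
    ∀ᶠ f in nhds f₀, Function.Injective f → ∀ c : ConfSp n, c.1 = range f → c ∈ S := by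
  classical
  rw [TopologicalSpace.nhds_generateFrom] at hS
  -- It suffices to treat the subbasic neighbourhoods.
  have key : (Filter.comap (fun f : {f : ι → Euc n // Function.Injective f} => f.1) (nhds f₀)).map
      (fun f => rangeConf f.1) ≤
      ⨅ s ∈ {s | c₀ ∈ s ∧ s ∈ {S | ∃ (r : ℝ) (_ : 0 < r) (p : ℕ) (V : Set (Set (Euc n))),
        IsOpenPSubsets n p (ball (0 : Euc n) r) V ∧
        S = {c : ConfSp n | c.1 ∩ sphere (0 : Euc n) r = ∅ ∧
          c.1 ∩ closedBall (0 : Euc n) r ∈ V}}}, Filter.principal s := by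
    refine le_iInf₂ ?_
    rintro s ⟨hcs, r, hr, p, V, ⟨hV1, hV2⟩, rfl⟩
    obtain ⟨hsph, hmem⟩ := hcs
    rw [hc₀] at hsph hmem
    obtain ⟨-, hcard⟩ := hV1 _ hmem
    have hns : ∀ i, ‖f₀ i‖ ≠ r := fun i hi => by
      have : f₀ i ∈ range f₀ ∩ sphere 0 r := ⟨⟨i, rfl⟩, by simpa using hi⟩
      rw [hsph] at this
      exact this
    -- `J` indexes the points in the ball; `e` enumerates it.
    let J := {i : ι // ‖f₀ i‖ < r}
    have hJ : Fintype.card J = p := by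
      rw [← hcard, ← Nat.card_eq_fintype_card]
      have : range f₀ ∩ closedBall 0 r = range (fun j : J => f₀ j.1) := by
        ext x
        constructor
        · rintro ⟨⟨i, rfl⟩, hx⟩
          exact ⟨⟨i, lt_of_le_of_ne (by simpa using hx) (hns i)⟩, rfl⟩
        · rintro ⟨j, rfl⟩
          exact ⟨⟨_, rfl⟩, by simpa using j.2.le⟩
      have hJinj : Function.Injective (fun j : J => f₀ j.1) := h₀.comp Subtype.val_injective
      rw [this, ← Set.image_univ, Set.ncard_image_of_injective _ hJinj, Set.ncard_univ]
    let e : Fin p ≃ J := (Fintype.equivFinOfCardEq hJ).symm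
    obtain ⟨O, hO, hOV⟩ := isOpen_induced_iff.1 hV2
    -- The part in the ball of any tuple whose points stay on their side of the sphere.
    have hpart : ∀ f : ι → Euc n, (∀ i, ‖f i‖ ≠ r) → (∀ i, ‖f i‖ < r ↔ ‖f₀ i‖ < r) →
        range f ∩ closedBall 0 r = range (fun k : Fin p => f (e k).1) := by
      intro f hf hf'
      ext x
      constructor
      · rintro ⟨⟨i, rfl⟩, hx⟩
        have h1 : ‖f i‖ < r := lt_of_le_of_ne (by simpa using hx) (hf i)
        exact ⟨e.symm ⟨i, (hf' i).1 h1⟩, by simp⟩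
      · rintro ⟨j, rfl⟩
        exact ⟨⟨_, rfl⟩, by simpa using ((hf' _).2 (e j).2).le⟩
    have hinj : ∀ f : ι → Euc n, Function.Injective f →
        Function.Injective (fun k : Fin p => f (e k).1) := fun f hf =>
      hf.comp (Subtype.val_injective.comp e.injective)
    have hmemO : ∀ f : ι → Euc n, Function.Injective f → (∀ i, ‖f i‖ ≠ r) →
        (∀ i, ‖f i‖ < r ↔ ‖f₀ i‖ < r) →
        ((fun k : Fin p => f (e k).1) ∈ O ↔ range f ∩ closedBall 0 r ∈ V) := by
      intro f hf h1 h2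
      have := Set.ext_iff.1 hOV ⟨fun k : Fin p => f (e k).1, hinj f hf,
        fun k => by simpa using (h2 _).2 (e k).2⟩
      rw [hpart f h1 h2]
      exact this
    have hO0 : (fun k : Fin p => f₀ (e k).1) ∈ O := (hmemO f₀ h₀ hns fun i => Iff.rfl).2 hmem
    have ev1 : ∀ᶠ f in nhds f₀, (fun k : Fin p => f (e k).1) ∈ O := by
      have hcont : Continuous (fun f : ι → Euc n => fun k : Fin p => f (e k).1) := by fun_prop
      exact hcont.continuousAt.eventually (hO.mem_nhds hO0)
    have ev2 : ∀ᶠ f in nhds f₀, ∀ i, ‖f i‖ ≠ r ∧ (‖f i‖ < r ↔ ‖f₀ i‖ < r) := by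
      rw [Filter.eventually_all]
      intro i
      have hcont : Continuous (fun f : ι → Euc n => ‖f i‖) := by fun_prop
      rcases lt_or_gt_of_ne (hns i) with h | h
      · filter_upwards [hcont.continuousAt.eventually (eventually_lt_nhds h)] with f hf
        exact ⟨hf.ne, by simp [hf, h]⟩
      · filter_upwards [hcont.continuousAt.eventually (eventually_gt_nhds h)] with f hf
        exact ⟨ne_of_gt hf, by simp [not_lt.2 hf.le, not_lt.2 h.le]⟩
    rw [Filter.le_principal_iff, Filter.mem_map, Filter.mem_comap]
    refine ⟨_, ev1.and ev2, ?_⟩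
    rintro ⟨f, hf⟩ ⟨h1, h2⟩
    refine ⟨?_, (hmemO f hf (fun i => (h2 i).1) (fun i => (h2 i).2)).1 h1⟩
    ext x
    simp only [mem_inter_iff, mem_empty_iff_false, iff_false, not_and]
    rintro ⟨i, rfl⟩ hx
    exact (h2 i).1 (by simpa using hx)
  have h3 := key hS
  rw [Filter.mem_map, Filter.mem_comap] at h3
  obtain ⟨W, hW, hWS⟩ := h3
  filter_upwards [hW] with f hfW hf c hc
  have : (⟨f, hf⟩ : {f : ι → Euc n // Function.Injective f}) ∈ _ := hWS hfW
  have hceq : c = rangeConf f := Subtype.ext hc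
  rw [hceq]
  exact this

/-- The set of configurations enumerated by some injective tuple in `U ∩ (int B)ᵖ` is open: its
preimage in the space of tuples is the union of the translates of `U` under the symmetric group. -/
lemma isOpenPSubsets_tuples {n p : ℕ} (r : ℝ) (U : Set (Fin p → Euc n)) (hU : IsOpen U) :
    IsOpenPSubsets n p (ball (0 : Euc n) r)
      {s | ∃ f ∈ InjTup n p (ball (0 : Euc n) r), f ∈ U ∧ range f = s} := by
  constructor
  · rintro s ⟨f, ⟨hf, hfb⟩, -, rfl⟩
    refine ⟨by rintro _ ⟨i, rfl⟩; exact hfb i, ?_⟩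
    rw [← Set.image_univ, Set.ncard_image_of_injective _ hf, Set.ncard_univ, Nat.card_fin]
  · have : {f : InjTup n p (ball (0 : Euc n) r) | Set.range (f : Fin p → Euc n) ∈
        {s | ∃ f ∈ InjTup n p (ball (0 : Euc n) r), f ∈ U ∧ range f = s}} =
        ⋃ σ : Equiv.Perm (Fin p),
          {f : InjTup n p (ball (0 : Euc n) r) | (fun i => f.1 (σ i)) ∈ U} := by
      ext f
      rw [mem_iUnion]
      constructor
      · rintro ⟨g, ⟨hg, -⟩, hgU, hgf⟩
        refine ⟨(Equiv.ofInjective g hg).trans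
          ((Equiv.setCongr hgf).trans (Equiv.ofInjective f.1 f.2.1).symm), ?_⟩
        refine Eq.mp (congrArg (· ∈ U) (funext fun i => Eq.symm ?_)) hgU
        exact Equiv.apply_ofInjective_symm f.2.1 (⟨g i, hgf ▸ mem_range_self i⟩ : range f.1)
      · rintro ⟨σ, hσ⟩
        refine ⟨_, ⟨f.2.1.comp σ.injective, fun i => f.2.2 _⟩, hσ, ?_⟩
        exact σ.surjective.range_comp f.1
    rw [this]
    refine isOpen_iUnion fun σ => ?_
    have hcont : Continuous (fun f : InjTup n p (ball (0 : Euc n) r) => fun i => f.1 (σ i)) :=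
      continuous_pi fun i => (continuous_apply (σ i)).comp continuous_subtype_val
    exact hU.preimage hcont

lemma norm_lt_of_mem_slab {n : ℕ} {a b : ℝ} (hb : 0 ≤ b) (hab : a < b) {x : Euc n}
    (hx : x ∈ SlabRegion n 0 a) : ‖x‖ < (n : ℝ) * (b + 1) + 1 := by
  have hcoord : ∀ i, ‖x i‖ ≤ b + 1 := by
    intro i
    rw [Real.norm_eq_abs, abs_le]
    rcases Nat.eq_zero_or_pos (i : ℕ) with h | h
    · have := hx.1 i h
      constructor <;> linarith [this.1, this.2]
    · have := hx.2 i h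
      constructor <;> linarith [this.1, this.2]
  have h1 : ‖x‖ ≤ ∑ i, ‖x i‖ := by
    have hdec : x = ∑ i, EuclideanSpace.single i (x i) := by
      ext j
      simp [Finset.sum_apply, Pi.single_apply]
    calc ‖x‖ = ‖∑ i, EuclideanSpace.single i (x i)‖ := by rw [← hdec]
      _ ≤ ∑ i, ‖(EuclideanSpace.single i (x i) : Euc n)‖ := norm_sum_le _ _
      _ = _ := by simp
  have h2 : ∑ i, ‖x i‖ ≤ ∑ _i : Fin n, (b + 1) := Finset.sum_le_sum fun i _ => hcoord i
  rw [Finset.sum_const, Finset.card_univ, Fintype.card_fin, nsmul_eq_mul] at h2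
  linarith

/-- Near a point of `ℳⁿ'⁰`, configurations are enumerated by tuples close to a given enumeration. -/
lemma eventually_exists_tuple {n p : ℕ} (x₀ : Mon n 0) (f₀ : Fin p → Euc n)
    (h₀ : Function.Injective f₀) (hx₀ : x₀.1.1.1 = range f₀) (U : Set (Fin p → Euc n))
    (hU : U ∈ nhds f₀) :
    ∀ᶠ x in nhds x₀, ∃ f ∈ U, Function.Injective f ∧ x.1.1.1 = range f := by
  obtain ⟨U', hU'U, hU', hfU'⟩ := _root_.mem_nhds_iff.1 hU
  have ha₀ : 0 ≤ x₀.1.2 := x₀.2.1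
  -- A radius whose ball contains every configuration of length less than `x₀.1.2 + 1`.
  set r : ℝ := (n : ℝ) * (x₀.1.2 + 1 + 1) + 1 with hr
  have hr0 : 0 < r := by positivity
  have hball : ∀ x : Mon n 0, x.1.2 < x₀.1.2 + 1 → ∀ v ∈ x.1.1.1, ‖v‖ < r := fun x hx v hv =>
    norm_lt_of_mem_slab (by linarith) hx (x.2.2 hv)
  have hsub : ∀ x : Mon n 0, x.1.2 < x₀.1.2 + 1 → x.1.1.1 ∩ closedBall 0 r = x.1.1.1 :=
    fun x hx => inter_eq_left.2 fun v hv => by simpa using (hball x hx v hv).le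
  let V : Set (Set (Euc n)) := {s | ∃ f ∈ InjTup n p (ball (0 : Euc n) r), f ∈ U' ∧ range f = s}
  let S : Set (ConfSp n) :=
    {c : ConfSp n | c.1 ∩ sphere (0 : Euc n) r = ∅ ∧ c.1 ∩ closedBall (0 : Euc n) r ∈ V}
  have hS : IsOpen S :=
    TopologicalSpace.isOpen_generateFrom_of_mem ⟨r, hr0, p, V, isOpenPSubsets_tuples r U' hU', rfl⟩
  have hxS : x₀.1.1 ∈ S := by
    refine ⟨?_, ?_⟩
    · ext v
      simp only [mem_inter_iff, mem_empty_iff_false, iff_false, not_and]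
      intro hv hv'
      exact (hball x₀ (by linarith) v hv).ne (by simpa using hv')
    · rw [hsub x₀ (by linarith)]
      refine ⟨f₀, ⟨h₀, fun i => ?_⟩, hfU', hx₀.symm⟩
      simpa using hball x₀ (by linarith) (f₀ i) (by rw [hx₀]; exact ⟨i, rfl⟩)
  have hval : Continuous (fun x : Mon n 0 => x.1) := continuous_subtype_val
  have e1 : ∀ᶠ x : Mon n 0 in nhds x₀, x.1.1 ∈ S :=
    (continuous_fst.comp hval).continuousAt.eventually (hS.mem_nhds hxS)
  have e2 : ∀ᶠ x : Mon n 0 in nhds x₀, x.1.2 < x₀.1.2 + 1 :=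
    (continuous_snd.comp hval).continuousAt.eventually (eventually_lt_nhds (by simp))
  filter_upwards [e1, e2] with x h1 h2
  obtain ⟨f, hf, hfU, hfx⟩ := h1.2
  rw [hsub x h2] at hfx
  exact ⟨f, hU'U hfU, hf.1, hfx.symm⟩

/-! ### The homotopy -/

/-- The affine map of `ℝⁿ` that adds `b` to the first coordinate and applies `u ↦ l * u + d` to the
second one. -/
def move {n : ℕ} (l d b : ℝ) (x : Euc n) : Euc n :=
  WithLp.toLp 2 fun i => if (i : ℕ) = 0 then x i + b else if (i : ℕ) = 1 then l * x i + d else x i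

lemma move_apply {n : ℕ} (l d b : ℝ) (x : Euc n) (i : Fin n) :
    move l d b x i =
      if (i : ℕ) = 0 then x i + b else if (i : ℕ) = 1 then l * x i + d else x i := rfl

/-- The compression factor: `1` at the ends, `1/2` on `[1/4, 3/4]`. -/
def squeeze (t : ℝ) : ℝ := max (1 / 2) |2 * t - 1|

/-- The progress of the exchange: `0` up to time `1/4` and `1` from time `3/4` on. -/
def shift (t : ℝ) : ℝ := max 0 (min 1 (2 * t - 1 / 2))

lemma continuous_squeeze : Continuous squeeze := by unfold squeeze; fun_prop

lemma continuous_shift : Continuous shift := by unfold shift; fun_prop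

lemma squeeze_pos (t : ℝ) : 0 < squeeze t := lt_of_lt_of_le (by norm_num) (le_max_left _ _)

lemma squeeze_le_one {t : ℝ} (h0 : 0 ≤ t) (h1 : t ≤ 1) : squeeze t ≤ 1 :=
  max_le (by norm_num) (abs_le.2 ⟨by linarith, by linarith⟩)

lemma shift_nonneg (t : ℝ) : 0 ≤ shift t := le_max_left _ _

lemma shift_le_one (t : ℝ) : shift t ≤ 1 := max_le (by norm_num) (min_le_left _ _)

lemma shift_or_squeeze (t : ℝ) : shift t = 0 ∨ shift t = 1 ∨ squeeze t = 1 / 2 := by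
  rcases le_total t (1 / 4) with h | h
  · left
    exact max_eq_left ((min_le_right _ _).trans (by linarith))
  rcases le_total (3 / 4) t with h' | h'
  · right; left
    unfold shift
    rw [min_eq_left (by linarith)]
    norm_num
  · right; right
    exact max_eq_left (abs_le.2 ⟨by linarith, by linarith⟩)

lemma move_injective {n : ℕ} {l d b : ℝ} (hl : 0 < l) :
    Function.Injective (move l d b : Euc n → Euc n) := by
  intro x y h
  ext i
  have hi : move l d b x i = move l d b y i := by rw [h]
  simp only [move_apply] at hi
  split_ifs at hi
  · linarith
  · exact mul_left_cancel₀ hl.ne' (by linarith)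
  · exact hi

lemma move_mem_slab {n : ℕ} {l d b a a' : ℝ} (hl : 0 < l) (hd : 0 ≤ d) (hld : l + d ≤ 1)
    (hb : 0 ≤ b) (hba : a + b ≤ a') {x : Euc n} (hx : x ∈ SlabRegion n 0 a) :
    move l d b x ∈ SlabRegion n 0 a' := by
  refine ⟨fun i hi => ?_, fun i hi => ?_⟩
  · have := hx.1 i hi
    rw [move_apply, if_pos hi]
    exact ⟨by linarith [this.1], by linarith [this.2]⟩
  · have := hx.2 i hi
    rw [move_apply, if_neg hi.ne']
    split_ifs
    · exact ⟨by nlinarith [this.1], by nlinarith [this.2]⟩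
    · exact this

/-- The two moving pieces never meet. -/
lemma disjoint_move {n : ℕ} (hn : 2 ≤ n) (t : ℝ) {a a' : ℝ} {x y : Euc n}
    (hx : x ∈ SlabRegion n 0 a) (hy : y ∈ SlabRegion n 0 a') :
    move (squeeze t) 0 (shift t * a') x ≠
      move (squeeze t) (1 - squeeze t) ((1 - shift t) * a) y := by
  intro h
  have h0 := congrArg (fun v : Euc n => v ⟨0, by omega⟩) h
  have h1 := congrArg (fun v : Euc n => v ⟨1, by omega⟩) h
  simp only [move_apply] at h0 h1
  simp at h0 h1
  have hx0 := hx.1 ⟨0, by omega⟩ rfl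
  have hy0 := hy.1 ⟨0, by omega⟩ rfl
  have hx1 := hx.2 ⟨1, by omega⟩ one_pos
  have hy1 := hy.2 ⟨1, by omega⟩ one_pos
  rcases shift_or_squeeze t with hs | hs | hs
  · rw [hs] at h0
    linarith [hx0.2, hy0.1]
  · rw [hs] at h0
    linarith [hx0.1, hy0.2]
  · rw [hs] at h1
    linarith [hx1.2, hy1.1]

/-- The homotopy from `μ` to `μ ∘ swap`. -/
def homotopyFun (n : ℕ) (q : unitInterval × (Mon n 0 × Mon n 0)) : Mon n 0 :=
  ⟨(⟨move (squeeze q.1) 0 (shift q.1 * q.2.2.1.2) '' q.2.1.1.1.1 ∪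
      move (squeeze q.1) (1 - squeeze q.1) ((1 - shift q.1) * q.2.1.1.2) '' q.2.2.1.1.1,
      (q.2.1.1.1.2.image _).union (q.2.2.1.1.2.image _)⟩, q.2.1.1.2 + q.2.2.1.2), by
    have h1 := squeeze_le_one q.1.2.1 q.1.2.2
    have h2 := squeeze_pos q.1
    have h3 := shift_nonneg q.1
    have h4 := shift_le_one q.1
    have ha : 0 ≤ q.2.1.1.2 := q.2.1.2.1
    have ha' : 0 ≤ q.2.2.1.2 := q.2.2.2.1
    refine ⟨add_nonneg ha ha', union_subset ?_ ?_⟩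
    · rintro _ ⟨x, hx, rfl⟩
      exact move_mem_slab h2 le_rfl (by linarith) (by positivity) (by nlinarith) (q.2.1.2.2 hx)
    · rintro _ ⟨x, hx, rfl⟩
      exact move_mem_slab h2 (by linarith) (by linarith) (mul_nonneg (by linarith) ha)
        (by nlinarith) (q.2.2.2.2 hx)⟩

/-- The homotopy on enumerating tuples. -/
def tupleFun {n p p' : ℕ} (z : (ℝ × ℝ × ℝ) × ((Fin p → Euc n) × (Fin p' → Euc n))) :
    Fin p ⊕ Fin p' → Euc n :=
  Sum.elim (fun i => move (squeeze z.1.1) 0 (shift z.1.1 * z.1.2.2) (z.2.1 i))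
    (fun j => move (squeeze z.1.1) (1 - squeeze z.1.1) ((1 - shift z.1.1) * z.1.2.1) (z.2.2 j))

lemma continuous_tupleFun {n p p' : ℕ} :
    Continuous (tupleFun : _ → Fin p ⊕ Fin p' → Euc n) := by
  have h1 := continuous_squeeze
  have h2 := continuous_shift
  refine continuous_pi fun k => ?_
  rcases k with i | j
  all_goals
    simp only [tupleFun, Sum.elim_inl, Sum.elim_inr, move]
    refine (PiLp.continuous_toLp 2 _).comp (continuous_pi fun m => ?_)
    split_ifs <;> fun_prop

lemma tupleFun_spec {n p p' : ℕ} (hn : 2 ≤ n) (q : unitInterval × (Mon n 0 × Mon n 0))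
    (f : Fin p → Euc n) (g : Fin p' → Euc n) (hf : Function.Injective f)
    (hg : Function.Injective g) (hqf : q.2.1.1.1.1 = range f) (hqg : q.2.2.1.1.1 = range g) :
    Function.Injective (tupleFun ((q.1.1, q.2.1.1.2, q.2.2.1.2), (f, g))) ∧
      (homotopyFun n q).1.1.1 = range (tupleFun ((q.1.1, q.2.1.1.2, q.2.2.1.2), (f, g))) := by
  constructor
  · refine Function.Injective.sumElim ((move_injective (squeeze_pos _)).comp hf)
      ((move_injective (squeeze_pos _)).comp hg) fun i j => ?_
    exact disjoint_move hn _ (q.2.1.2.2 (hqf ▸ mem_range_self i))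
      (q.2.2.2.2 (hqg ▸ mem_range_self j))
  · simp only [homotopyFun, tupleFun, Sum.elim_range, hqf, hqg, ← range_comp]
    rfl

lemma exists_enum {n : ℕ} (c : ConfSp n) :
    ∃ (p : ℕ) (f : Fin p → Euc n), Function.Injective f ∧ c.1 = range f := by
  obtain ⟨p, f, hf⟩ := c.2.fin_embedding
  exact ⟨p, f, f.injective, hf.symm⟩

lemma continuous_homotopyFun {n : ℕ} (hn : 2 ≤ n) : Continuous (homotopyFun n) := by
  have hval : Continuous (fun x : Mon n 0 => x.1) := continuous_subtype_val
  have hlen : Continuous (fun x : Mon n 0 => x.1.2) := continuous_snd.comp hval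
  refine continuous_induced_rng.2 (Continuous.prodMk ?_ ?_)
  swap
  · exact (hlen.comp (continuous_fst.comp continuous_snd)).add
      (hlen.comp (continuous_snd.comp continuous_snd))
  change Continuous (fun q => (homotopyFun n q).1.1)
  rw [continuous_iff_continuousAt]
  intro q₀ S hS
  obtain ⟨p, f₀, hf₀, hqf₀⟩ := exists_enum q₀.2.1.1.1
  obtain ⟨p', g₀, hg₀, hqg₀⟩ := exists_enum q₀.2.2.1.1
  obtain ⟨hinj, hrange⟩ := tupleFun_spec hn q₀ f₀ g₀ hf₀ hg₀ hqf₀ hqg₀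
  have ev := continuous_tupleFun.continuousAt.eventually
    (eventually_range_mem _ hinj _ hrange S hS)
  rw [nhds_prod_eq, Filter.eventually_prod_iff] at ev
  obtain ⟨A, hA, B, hB, hAB⟩ := ev
  rw [nhds_prod_eq, Filter.eventually_prod_iff] at hB
  obtain ⟨U, hU, W, hW, hUW⟩ := hB
  have hpar : Continuous (fun q : unitInterval × (Mon n 0 × Mon n 0) =>
      ((q.1 : ℝ), q.2.1.1.2, q.2.2.1.2)) :=
    (continuous_subtype_val.comp continuous_fst).prodMk
      ((hlen.comp (continuous_fst.comp continuous_snd)).prodMk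
        (hlen.comp (continuous_snd.comp continuous_snd)))
  have e1 := hpar.continuousAt.eventually hA
  have e2 := (continuous_fst.comp continuous_snd).continuousAt (x := q₀) |>.eventually
    (eventually_exists_tuple q₀.2.1 f₀ hf₀ hqf₀ {f | U f} hU)
  have e3 := (continuous_snd.comp continuous_snd).continuousAt (x := q₀) |>.eventually
    (eventually_exists_tuple q₀.2.2 g₀ hg₀ hqg₀ {g | W g} hW)
  change ∀ᶠ q in nhds q₀, (homotopyFun n q).1.1 ∈ S
  filter_upwards [e1, e2, e3] with q h1 ⟨f, hfU, hf, hqf⟩ ⟨g, hgW, hg, hqg⟩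
  obtain ⟨hinj', hrange'⟩ := tupleFun_spec hn q f g hf hg hqf hqg
  exact hAB h1 (hUW hfU hgW) hinj' _ hrange'

lemma move_one_zero_zero {n : ℕ} : (move 1 0 0 : Euc n → Euc n) = id := by
  ext x i
  simp [move_apply]

lemma move_one_zero {n : ℕ} (hn : 0 < n) (b : ℝ) :
    (move 1 0 b : Euc n → Euc n) =
      fun v => v + EuclideanSpace.single (⟨0, hn⟩ : Fin n) b := by
  ext x i
  rw [move_apply]
  by_cases h : (i : ℕ) = 0
  · have : i = ⟨0, hn⟩ := Fin.ext h
    subst this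
    simp
  · have : i ≠ ⟨0, hn⟩ := fun h' => h (by rw [h'])
    simp [h, this]

lemma squeeze_at_zero : squeeze 0 = 1 := by norm_num [squeeze]

lemma squeeze_at_one : squeeze 1 = 1 := by norm_num [squeeze]

lemma shift_at_zero : shift 0 = 0 := by norm_num [shift]

lemma shift_at_one : shift 1 = 1 := by norm_num [shift]

lemma homotopyFun_zero {n : ℕ} (x y : Mon n 0) :
    (homotopyFun n (0, (x, y))).1.1.1 = x.1.1.1 ∪ move 1 0 x.1.2 '' y.1.1.1 := by
  change move (squeeze 0) 0 (shift 0 * y.1.2) '' x.1.1.1 ∪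
    move (squeeze 0) (1 - squeeze 0) ((1 - shift 0) * x.1.2) '' y.1.1.1 = _
  rw [squeeze_at_zero, shift_at_zero, zero_mul, sub_self, sub_zero, one_mul, move_one_zero_zero,
    image_id]

lemma homotopyFun_one {n : ℕ} (x y : Mon n 0) :
    (homotopyFun n (1, (x, y))).1.1.1 = move 1 0 y.1.2 '' x.1.1.1 ∪ y.1.1.1 := by
  change move (squeeze 1) 0 (shift 1 * y.1.2) '' x.1.1.1 ∪
    move (squeeze 1) (1 - squeeze 1) ((1 - shift 1) * x.1.2) '' y.1.1.1 = _
  rw [squeeze_at_one, shift_at_one, sub_self, zero_mul, one_mul, move_one_zero_zero, image_id]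

/-- For `n ≥ 2`, the juxtaposition product on `ℳⁿ'⁰`, given by
`μ((c,a),(c′,a′)) = (c ∪ (c′ + a·e₁), a + a′)`, is continuous and homotopy-commutative:
`μ` is homotopic to `μ` composed with the swap of the two factors. -/
theorem statement5 (n : ℕ) (hn : 2 ≤ n) :
    ∃ μ : C(Mon n 0 × Mon n 0, Mon n 0),
      (∀ x y : Mon n 0,
        (μ (x, y)).1.1.1 =
            x.1.1.1 ∪
              ((fun v => v + EuclideanSpace.single (⟨0, by omega⟩ : Fin n) x.1.2) '' y.1.1.1) ∧
          (μ (x, y)).1.2 = x.1.2 + y.1.2) ∧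
        μ.Homotopic (μ.comp ⟨Prod.swap, continuous_swap⟩) := by
  refine ⟨⟨fun z => homotopyFun n (0, z), (continuous_homotopyFun hn).comp (by fun_prop)⟩, ?_, ?_⟩
  · intro x y
    refine ⟨?_, rfl⟩
    rw [← move_one_zero]
    exact homotopyFun_zero x y
  · refine ⟨⟨⟨homotopyFun n, continuous_homotopyFun hn⟩, fun _ => rfl, ?_⟩⟩
    rintro ⟨x, y⟩
    refine Subtype.ext (Prod.ext (Subtype.ext ?_) (add_comm _ _))
    exact (homotopyFun_one x y).trans ((union_comm _ _).trans (homotopyFun_zero y x).symm)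
end
end

section
/- For every integer p ≥ 0, the unordered configuration space of p points in ℝ^ℕ is an Eilenberg–MacLane space K(Σ_p, 1): it is path-connected, its fundamental group is isomorphic to the symmetric group Σ_p, and its homotopy groups πᵢ vanish for all i ≥ 2. -/
/-!
The quotient map `OrdConf p → UnordConf p` is a covering with group `Σ_p`, because the points of an
injective tuple have pairwise disjoint neighbourhoods (`isQuotientCoveringMap_unordQuot`), and its
total space is contractible (`contractibleSpace_ordConf`): interpolate linearly from the identity
of `ℝ^ℕ` to the right shift, which is an injective linear map at every time, and then move the
`i`-th point linearly to `i · e₀`, using that the coordinate `0` has been freed by the shift.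

Hence `UnordConf p` is path connected with fundamental group `Σ_p`. For `n ≥ 2` the boundary of the
`n`-cube is connected, so every `n`-dimensional loop downstairs lifts to one upstairs
(`exists_genLoop_lift`), where any two loops are homotopic
(`genLoop_homotopic_of_contractible`).
-/

open Metric Set

noncomputable section

/-- The ordered configuration space of `p` points in `ℝ^ℕ`: the subspace of `(ℝ^ℕ)ᵖ`
consisting of injective `p`-tuples of points of `ℝ^ℕ` (with `ℝ^ℕ` carrying the product
topology). -/
def OrdConf (p : ℕ) : Type := {f : Fin p → (ℕ → ℝ) // Function.Injective f}

instance (p : ℕ) : TopologicalSpace (OrdConf p) :=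
  inferInstanceAs (TopologicalSpace {f : Fin p → (ℕ → ℝ) // Function.Injective f})

/-- The action of the symmetric group `Σ_p` on ordered configurations by permuting the
entries of a tuple: `(σ • f) i = f (σ⁻¹ i)`. -/
def permSmul (p : ℕ) (σ : Equiv.Perm (Fin p)) (f : OrdConf p) : OrdConf p :=
  ⟨fun i => f.1 (σ⁻¹ i), f.2.comp (Equiv.injective σ⁻¹)⟩

instance (p : ℕ) : SMul (Equiv.Perm (Fin p)) (OrdConf p) := ⟨permSmul p⟩

instance (p : ℕ) : MulAction (Equiv.Perm (Fin p)) (OrdConf p) where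
  one_smul f := Subtype.ext (funext fun i => by
    show f.1 ((1 : Equiv.Perm (Fin p))⁻¹ i) = f.1 i
    simp)
  mul_smul σ τ f := Subtype.ext (funext fun i => by
    show f.1 ((σ * τ)⁻¹ i) = f.1 (τ⁻¹ (σ⁻¹ i))
    simp [mul_inv_rev])

/-- The unordered configuration space of `p` points in `ℝ^ℕ`: the orbit space of the
`Σ_p`-action permuting entries, with the quotient topology. -/
def UnordConf (p : ℕ) : Type :=
  Quotient (MulAction.orbitRel (Equiv.Perm (Fin p)) (OrdConf p))

instance (p : ℕ) : TopologicalSpace (UnordConf p) :=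
  inferInstanceAs (TopologicalSpace
    (Quotient (MulAction.orbitRel (Equiv.Perm (Fin p)) (OrdConf p))))

/-- The quotient map from the ordered configuration space onto the orbit space. -/
def unordQuot (p : ℕ) : OrdConf p → UnordConf p :=
  Quotient.mk (MulAction.orbitRel (Equiv.Perm (Fin p)) (OrdConf p))

open scoped unitInterval Topology

/-! ### The ordered configuration space is contractible -/

/-- The right shift `(x₀, x₁, …) ↦ (0, x₀, x₁, …)` on real sequences. -/
def shiftSeq (x : ℕ → ℝ) : ℕ → ℝ
  | 0 => 0
  | n + 1 => x n

/-- Straight-line interpolation between the identity and the shift is injective at every time: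
at `t = 1` it is the shift, and at `t ≠ 1` the entries are recovered one after another. -/
theorem shift_interpolation_injective (t : ℝ) :
    Function.Injective fun (x : ℕ → ℝ) (n : ℕ) => (1 - t) * x n + t * shiftSeq x n := by
  intro x y h
  have h' (n : ℕ) : (1 - t) * x n + t * shiftSeq x n = (1 - t) * y n + t * shiftSeq y n :=
    congrFun h n
  funext n
  by_cases ht : t = 1
  · simpa [ht, shiftSeq] using h' (n + 1)
  · have ht' : 1 - t ≠ 0 := fun h0 => ht (by linarith)
    induction n with
    | zero => simpa [shiftSeq, ht'] using h' 0
    | succ n ih =>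
      have h1 := h' (n + 1)
      simp only [shiftSeq, ih] at h1
      exact mul_left_cancel₀ ht' (by linarith)

theorem continuous_shiftSeq : Continuous shiftSeq := by
  refine continuous_pi fun n => ?_
  cases n with
  | zero => exact continuous_const
  | succ n => exact continuous_apply n

theorem continuous_ordConf_val (p : ℕ) :
    Continuous (Subtype.val : OrdConf p → Fin p → ℕ → ℝ) :=
  continuous_subtype_val

/-- Apply the shift to every point of a configuration. -/
def shiftConf (p : ℕ) : C(OrdConf p, OrdConf p) where
  toFun f := ⟨fun i => shiftSeq (f.1 i), fun i j h => f.2 (funext fun n => congrFun h (n + 1))⟩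
  continuous_toFun := by
    refine Continuous.subtype_mk (continuous_pi fun i => ?_) _
    exact continuous_shiftSeq.comp ((continuous_apply i).comp (continuous_ordConf_val p))

/-- The configuration of the points `i · e₀`, `i < p`, on the axis of coordinate `0`. -/
def axisConf (p : ℕ) : OrdConf p :=
  ⟨fun i n => if n = 0 then (i : ℝ) else 0, fun i j h => by
    have h0 := congrFun h 0
    simp only [if_true, Nat.cast_inj] at h0
    exact Fin.ext h0⟩

/-- The straight-line homotopy from the identity to the shift. -/
def homotopyIdShift (p : ℕ) : (ContinuousMap.id (OrdConf p)).Homotopy (shiftConf p) where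
  toFun z := ⟨fun i n => (1 - (z.1 : ℝ)) * z.2.1 i n + (z.1 : ℝ) * shiftSeq (z.2.1 i) n,
    fun _ _ h => z.2.2 (shift_interpolation_injective z.1 h)⟩
  continuous_toFun := by
    refine Continuous.subtype_mk (continuous_pi fun i => continuous_pi fun n => ?_) _
    have h1 : Continuous fun z : I × OrdConf p => z.2.1 i :=
      (continuous_apply i).comp ((continuous_ordConf_val p).comp continuous_snd)
    have h2 : Continuous fun z : I × OrdConf p => z.2.1 i n := (continuous_apply n).comp h1
    have h3 : Continuous fun z : I × OrdConf p => shiftSeq (z.2.1 i) n :=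
      (continuous_apply n).comp (continuous_shiftSeq.comp h1)
    fun_prop
  map_zero_left f := Subtype.ext (by funext i n; simp)
  map_one_left f := Subtype.ext (by funext i n; simp; rfl)

/-- The straight-line homotopy from the shift to the constant map at `axisConf p`: at time `t` the
`i`-th point has coordinate `0` equal to `t * i`. -/
def homotopyShiftAxis (p : ℕ) :
    (shiftConf p).Homotopy (ContinuousMap.const (OrdConf p) (axisConf p)) where
  toFun z := ⟨fun i n => (1 - (z.1 : ℝ)) * shiftSeq (z.2.1 i) n + (z.1 : ℝ) * (axisConf p).1 i n, by
    intro i j h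
    by_cases ht : (z.1 : ℝ) = 0
    · refine z.2.2 (funext fun n => ?_)
      simpa [ht, shiftSeq] using congrFun h (n + 1)
    · have h0 := congrFun h 0
      simp only [shiftSeq, axisConf, if_true, mul_zero, zero_add] at h0
      exact Fin.ext (by exact_mod_cast mul_left_cancel₀ ht h0)⟩
  continuous_toFun := by
    refine Continuous.subtype_mk (continuous_pi fun i => continuous_pi fun n => ?_) _
    have h1 : Continuous fun z : I × OrdConf p => z.2.1 i :=
      (continuous_apply i).comp ((continuous_ordConf_val p).comp continuous_snd)
    have h3 : Continuous fun z : I × OrdConf p => shiftSeq (z.2.1 i) n :=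
      (continuous_apply n).comp (continuous_shiftSeq.comp h1)
    fun_prop
  map_zero_left f := Subtype.ext (by funext i n; simp; rfl)
  map_one_left f := Subtype.ext (by funext i n; simp)

instance contractibleSpace_ordConf (p : ℕ) : ContractibleSpace (OrdConf p) :=
  (contractible_iff_id_nullhomotopic _).mpr
    ⟨axisConf p, ⟨(homotopyIdShift p).trans (homotopyShiftAxis p)⟩⟩

/-! ### The quotient map is a covering -/

theorem isQuotientCoveringMap_unordQuot (p : ℕ) :
    IsQuotientCoveringMap (unordQuot p) (Equiv.Perm (Fin p)) where
  toIsQuotientMap := isQuotientMap_quotient_mk'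
  continuous_const_smul g := by
    refine Continuous.subtype_mk (continuous_pi fun i => ?_) _
    exact (continuous_apply (g⁻¹ i)).comp (continuous_ordConf_val p)
  apply_eq_iff_mem_orbit := Quotient.eq
  disjoint e := by
    obtain ⟨U, hU, hdisj⟩ := (Set.finite_range e.1).t2_separation
    refine ⟨{f | ∀ i, f.1 i ∈ U (e.1 i)}, ?_, ?_⟩
    · refine IsOpen.mem_nhds ?_ fun i => (hU _).1
      simp only [Set.ofPred_forall]
      exact isOpen_iInter_of_finite fun i =>
        (hU (e.1 i)).2.preimage ((continuous_apply i).comp (continuous_ordConf_val p))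
    · rintro g ⟨_, ⟨f, hf, rfl⟩, hg⟩
      rw [← inv_eq_one]
      refine Equiv.ext fun i => ?_
      -- `f (g⁻¹ i)` lies in the neighbourhoods of both `e (g⁻¹ i)` and `e i`.
      have h1 : f.1 (g⁻¹ i) ∈ U (e.1 (g⁻¹ i)) := hf _
      have h2 : f.1 (g⁻¹ i) ∈ U (e.1 i) := hg i
      by_contra hne
      exact Set.disjoint_left.mp
        (hdisj (Set.mem_range_self _) (Set.mem_range_self _) fun h => hne (e.2 h)) h1 h2

/-! ### Loops in a contractible space -/

/-- The dilation of the interval about its midpoint by the factor `1 + s`, clamped to `[0, 1]`. -/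
def stretch (s u : I) : I :=
  Set.projIcc (0 : ℝ) 1 zero_le_one ((u : ℝ) + s * ((u : ℝ) - 1 / 2))

/-- A tent function on the interval: `0` at the two ends and `1` on `[1/4, 3/4]`. -/
def plateau (u : I) : I :=
  Set.projIcc (0 : ℝ) 1 zero_le_one (4 * min (u : ℝ) (1 - u))

theorem continuous_stretch : Continuous fun z : I × I => stretch z.1 z.2 :=
  continuous_projIcc.comp (by fun_prop)

theorem continuous_plateau : Continuous plateau :=
  continuous_projIcc.comp (by fun_prop)

theorem stretch_zero_left (u : I) : stretch 0 u = u := by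
  simp [stretch]

theorem stretch_zero_right (s : I) : stretch s 0 = 0 :=
  Set.projIcc_of_le_left _ (by have := s.2.1; simp; linarith)

theorem stretch_one_right (s : I) : stretch s 1 = 1 :=
  Set.projIcc_of_right_le _ (by have := s.2.1; simp; linarith)

theorem plateau_zero : plateau 0 = 0 :=
  Set.projIcc_of_le_left _ (by simp)

theorem plateau_one : plateau 1 = 0 :=
  Set.projIcc_of_le_left _ (by simp)

theorem stretch_one_left (u : I) : (stretch 1 u = 0 ∨ stretch 1 u = 1) ∨ plateau u = 1 := by
  rcases le_total (u : ℝ) (1 / 4) with h | h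
  · exact .inl (.inl (Set.projIcc_of_le_left _ (by simp; linarith)))
  rcases le_total (3 / 4 : ℝ) u with h' | h'
  · exact .inl (.inr (Set.projIcc_of_right_le _ (by simp; linarith)))
  · refine .inr (Set.projIcc_of_right_le _ ?_)
    have : (1 / 4 : ℝ) ≤ min (u : ℝ) (1 - u) := le_min h (by linarith)
    linarith

/-- If `c` contracts `E` to the point `y`, every loop `F` based at `e` is homotopic, relative to the
boundary, to a map that only depends on the track `t ↦ c (t, e)` of the base point. The homotopy
shrinks `F` into the inner cube `[1/4, 3/4]ᴺ` while contracting it there, and uses the collar to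
interpolate along the track. -/
theorem genLoop_homotopic_track {N E : Type*} [Fintype N] [TopologicalSpace E] {e y : E}
    (c : (ContinuousMap.id E).Homotopy (ContinuousMap.const E y)) (F : GenLoop N E e)
    (G : C(N → I, E)) (hG : ∀ x, G x = c (∏ i, plateau (x i), e)) :
    F.1.HomotopicRel G (Cube.boundary N) := by
  refine ⟨{
    toFun := fun z => c (z.1 * ∏ i, plateau (z.2 i), F (fun i => stretch z.1 (z.2 i)))
    continuous_toFun := ?_
    map_zero_left := ?_
    map_one_left := ?_
    prop' := ?_ }⟩
  · refine c.continuous.comp (Continuous.prodMk ?_ ?_)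
    · refine continuous_fst.mul (continuous_finsetProd _ fun i _ => ?_)
      exact continuous_plateau.comp ((continuous_apply i).comp continuous_snd)
    · refine F.1.continuous.comp (continuous_pi fun i => ?_)
      exact continuous_stretch.comp
        (continuous_fst.prodMk ((continuous_apply i).comp continuous_snd))
  · intro x
    simp only [stretch_zero_left, zero_mul, c.apply_zero]
    rfl
  · intro x
    simp only [one_mul, hG]
    by_cases h : ∃ i, stretch 1 (x i) = 0 ∨ stretch 1 (x i) = 1
    · rw [GenLoop.boundary F _ h]
    · have hp : ∏ i, plateau (x i) = 1 :=
        Finset.prod_eq_one fun i _ =>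
          (stretch_one_left (x i)).resolve_left fun hi => h ⟨i, hi⟩
      simp [hp]
  · rintro s x ⟨i, hi⟩
    have h0 : ∏ i, plateau (x i) = 0 := by
      refine Finset.prod_eq_zero (Finset.mem_univ i) ?_
      rcases hi with hi | hi
      · rw [hi, plateau_zero]
      · rw [hi, plateau_one]
    have hF : F (fun i => stretch s (x i)) = e := by
      refine F.2 _ ⟨i, ?_⟩
      rcases hi with hi | hi
      · exact .inl (by simp only [hi, stretch_zero_right])
      · exact .inr (by simp only [hi, stretch_one_right])
    have hx : F.1 x = e := F.2 x ⟨i, hi⟩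
    simp [h0, hF, hx]

theorem genLoop_homotopic_of_contractible {N E : Type*} [Fintype N] [TopologicalSpace E]
    [ContractibleSpace E] {e : E} (F F' : GenLoop N E e) : GenLoop.Homotopic F F' := by
  obtain ⟨y, ⟨c⟩⟩ := (contractible_iff_id_nullhomotopic E).mp inferInstance
  let G : C(N → I, E) := ⟨fun x => c (∏ i, plateau (x i), e), by
    refine c.continuous.comp (Continuous.prodMk (continuous_finsetProd _ fun i _ => ?_)
      continuous_const)
    exact continuous_plateau.comp (continuous_apply i)⟩
  exact (genLoop_homotopic_track c F G fun _ => rfl).trans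
    (genLoop_homotopic_track c F' G fun _ => rfl).symm

/-! ### Lifting loops along a covering -/

theorem isPreconnected_cube_face {N : Type*} (i : N) (a : I) :
    IsPreconnected {x : N → I | x i = a} := by
  classical
  have h : {x : N → I | x i = a} =
      Set.pi Set.univ fun j => if j = i then ({a} : Set I) else Set.univ := by
    ext x
    simp only [Set.mem_ofPred_eq, Set.mem_univ_pi]
    constructor
    · intro hx j
      split_ifs with hj
      · rw [hj]; exact hx
      · trivial
    · intro hx
      simpa using hx i
  rw [h]
  refine isPreconnected_univ_pi fun j => ?_
  split_ifs
  · exact isPreconnected_singleton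
  · exact isPreconnected_univ

/-- In dimension at least two, loops lift to loops: any face of the cube meets a face
`{x j = 0}`, which contains the origin, so the lift is constant on the whole boundary. -/
theorem exists_genLoop_lift {N E X : Type*} [Nontrivial N] [TopologicalSpace E]
    [TopologicalSpace X] {π : E → X} (cov : IsCoveringMap π) (e : E) (f : GenLoop N X (π e)) :
    ∃ F : GenLoop N E e, ∀ x, π (F x) = f x := by
  classical
  -- The lift is the end of the lift of the radial homotopy from the constant map at the origin.
  let H : C(I × (N → I), X) := ⟨fun z => f (fun i => z.1 * z.2 i), by
    refine f.1.continuous.comp (continuous_pi fun i => ?_)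
    exact continuous_fst.mul ((continuous_apply i).comp continuous_snd)⟩
  obtain ⟨i₀⟩ : Nonempty N := inferInstance
  have hzero : f (fun _ => 0) = π e := f.2 _ ⟨i₀, .inl rfl⟩
  have H0 : ∀ a, H (0, a) = π (ContinuousMap.const (N → I) e a) := fun a => by
    simpa [H] using hzero
  let L := cov.liftHomotopy H (ContinuousMap.const _ e) H0
  have hL (t : I) (x : N → I) : π (L (t, x)) = f (fun i => t * x i) :=
    congrFun (cov.liftHomotopy_lifts H (ContinuousMap.const _ e) H0) (t, x)
  let F : C(N → I, E) := ⟨fun x => L (1, x), L.continuous.comp (by fun_prop)⟩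
  have hF (x : N → I) : π (F x) = f x := (hL 1 x).trans (by simp)
  have hF0 : F (fun _ => 0) = e := by
    have h : L (1, fun _ => 0) = L (0, fun _ => 0) :=
      cov.const_of_comp (g := fun t : I => L (t, fun _ => 0)) (L.continuous.comp (by fun_prop))
        (fun t t' => by simp [hL]) 1 0
    exact h.trans (cov.liftHomotopy_zero H (ContinuousMap.const _ e) H0 _)
  have hface (i : N) (a : I) (ha : a = 0 ∨ a = 1) (x x' : N → I) (hx : x i = a)
      (hx' : x' i = a) : F x = F x' := by
    refine cov.constOn_of_comp (isPreconnected_cube_face i a) F.continuous.continuousOn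
      ?_ hx hx'
    intro z hz z' hz'
    rw [hF, hF, GenLoop.boundary f z ⟨i, hz ▸ ha⟩,
      GenLoop.boundary f z' ⟨i, hz' ▸ ha⟩]
  refine ⟨⟨F, ?_⟩, hF⟩
  rintro x ⟨i, hi⟩
  obtain ⟨j, hj⟩ := exists_ne i
  rw [hface i (x i) hi x (Function.update x j 0) rfl (by simp [hj.symm]),
    hface j 0 (.inl rfl) (Function.update x j 0) (fun _ => 0) (by simp) rfl, hF0]

theorem subsingleton_homotopyGroup_of_contractible_cover {N E X : Type*} [Fintype N]
    [Nontrivial N] [TopologicalSpace E] [TopologicalSpace X] [ContractibleSpace E] {π : E → X}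
    (cov : IsCoveringMap π) (e : E) : Subsingleton (HomotopyGroup N X (π e)) := by
  refine ⟨fun a b => ?_⟩
  induction a using Quotient.inductionOn with | _ f
  induction b using Quotient.inductionOn with | _ g
  obtain ⟨F, hF⟩ := exists_genLoop_lift cov e f
  obtain ⟨G, hG⟩ := exists_genLoop_lift cov e g
  refine Quotient.sound ?_
  have h := (genLoop_homotopic_of_contractible F G).comp_continuousMap ⟨π, cov.continuous⟩
  have hf : (⟨π, cov.continuous⟩ : C(E, X)).comp F.1 = f.1 := ContinuousMap.ext hF
  have hg : (⟨π, cov.continuous⟩ : C(E, X)).comp G.1 = g.1 := ContinuousMap.ext hG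
  rw [hf, hg] at h
  exact h

/-- For every `p ≥ 0`, the unordered configuration space of `p` points in `ℝ^ℕ` is an
Eilenberg–MacLane space `K(Σ_p, 1)`: it is path-connected, its fundamental group is
isomorphic to the symmetric group `Σ_p`, and its homotopy groups `πᵢ` vanish for `i ≥ 2`. -/
theorem statement10 (p : ℕ) :
    PathConnectedSpace (UnordConf p) ∧
      (∀ q : UnordConf p,
        Nonempty (FundamentalGroup (UnordConf p) q ≃* Equiv.Perm (Fin p))) ∧
      ∀ (q : UnordConf p) (i : ℕ), 2 ≤ i →
        Subsingleton (HomotopyGroup (Fin i) (UnordConf p) q) := by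
  have hq := isQuotientCoveringMap_unordQuot p
  refine ⟨hq.surjective.pathConnectedSpace hq.continuous, fun q => ?_, fun q i hi => ?_⟩
  · obtain ⟨e, rfl⟩ := hq.surjective q
    exact ⟨(hq.fundamentalGroupEquiv ⟨e, rfl⟩).trans (MulEquiv.inv' _).symm⟩
  · obtain ⟨e, rfl⟩ := hq.surjective q
    have : Nontrivial (Fin i) := Fin.nontrivial_iff_two_le.mpr hi
    exact subsingleton_homotopyGroup_of_contractible_cover hq.isCoveringMap e
end
end
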